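/- Trickling down theorem: Let 1 ≤ k ≤ d−2 and let γ < 1 be a real number. Suppose that λ₂(G_T) ≤ γ for every face T ∈ 𝒞(k). Then every face S ∈ 𝒞(k−1) with λ₂(G_S) < 1 satisfies λ₂(G_S) ≤ γ/(1−γ). -/

import Mathlib

/-!
For a face `S` of the complex with `s = |S|`, let `v i = w(S ∪ {i})` and `A i j = w(S ∪ {i, j})`,
where `w` is the total top-level mass above a face. Up to normalisation `v` is `π_{S,1}`, the rows
of `A` sum to `(d - s - 1) v`, and the local walk is `(Gg)(i) = ∑ j, A i j g j / ((d - s - 1) v i)`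
(`localWalk_eq`, `lamTwo_eq`).

The spectral gap of the link of `S ∪ {i}`, written for functions of arbitrary mean, bounds the
form `∑ w(S ∪ {i, j, l}) g j g l` by `γ` times the squared norm plus `1 - γ` times the squared mean
of `g`. That mean is `(Gg)(i)`, and summing over `i` turns the triple weights into edge weights,
so that `⟨g, Gg⟩ ≤ γ ‖g‖² + (1 - γ) ‖Gg‖²` in `L²(π_{S,1})` (`edgeForm_link_le`). Evaluated on
an eigenfunction for `l = λ₂(G_S)` this says `l ≤ γ + (1 - γ) l²`, that is
`(1 - l) ((1 - γ) l - γ) ≤ 0`, and `l < 1` gives the claim. `IsWalk.sSup_le` carries out this last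
step with almost-maximisers of the Rayleigh quotient in place of an eigenfunction.
-/

open Finset

noncomputable section

variable {E : Type*} [Fintype E] [DecidableEq E]

/-- The faces of cardinality `k` of the set family `C`. -/
def faces (C : Finset (Finset E)) (k : ℕ) : Finset (Finset E) :=
  C.filter fun S => S.card = k

/-- `C` is a pure simplicial complex of dimension `d`: it is nonempty, closed under
taking subsets, and every face is contained in a face of cardinality `d`
(hence all maximal faces have cardinality `d`). -/
def IsPureComplex (C : Finset (Finset E)) (d : ℕ) : Prop :=
  C.Nonempty ∧ (∀ S ∈ C, ∀ T ⊆ S, T ∈ C) ∧ (∀ S ∈ C, ∃ T ∈ C, S ⊆ T ∧ T.card = d)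

/-- `pid` is a probability distribution with full support on the top level faces. -/
def IsTopDist (C : Finset (Finset E)) (d : ℕ) (pid : Finset E → ℝ) : Prop :=
  (∀ T ∈ faces C d, 0 < pid T) ∧ ∑ T ∈ faces C d, pid T = 1

/-- The (unnormalised) weight of a face: total top-level mass above it. -/
def wgt (C : Finset (Finset E)) (d : ℕ) (pid : Finset E → ℝ) (S : Finset E) : ℝ :=
  ∑ T ∈ (faces C d).filter (fun T => S ⊆ T), pid T

/-- The distribution `π_k` at level `k`: `π_k(S) ∝ Σ_{T ∈ C(d), T ⊇ S} π_d(T)`. -/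
def piLev (C : Finset (Finset E)) (d : ℕ) (pid : Finset E → ℝ) (k : ℕ) (S : Finset E) : ℝ :=
  if S ∈ faces C k then wgt C d pid S / ∑ T ∈ faces C k, wgt C d pid T else 0

/-- The level-`k` faces of the link of the face `S`. -/
def linkFaces (C : Finset (Finset E)) (S : Finset E) (k : ℕ) : Finset (Finset E) :=
  Finset.univ.powerset.filter fun T => S ∩ T = ∅ ∧ S ∪ T ∈ C ∧ T.card = k

/-- The distribution `π_{S,k}` on the level-`k` faces of the link of `S`:
`π_{S,k}(T) ∝ π_{|S|+k}(S ∪ T)`. -/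
def linkPi (C : Finset (Finset E)) (d : ℕ) (pid : Finset E → ℝ) (S : Finset E) (k : ℕ)
    (T : Finset E) : ℝ :=
  if T ∈ linkFaces C S k then
    piLev C d pid (S.card + k) (S ∪ T) /
      ∑ T' ∈ linkFaces C S k, piLev C d pid (S.card + k) (S ∪ T')
  else 0

/-- Generic up operator with respect to a measure `ν` on a collection `dom` of faces:
from `R` move to a superset `T ∈ dom` with probability proportional to `ν T`.
Acts on functions on `dom`, producing a function on the level below. -/
def upWith (ν : Finset E → ℝ) (dom : Finset (Finset E)) (f : Finset E → ℝ) (R : Finset E) : ℝ :=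
  ∑ T ∈ dom.filter (fun T => R ⊆ T),
    (ν T / ∑ T' ∈ dom.filter (fun T' => R ⊆ T'), ν T') * f T

/-- The up operator `P_k^↑`, acting on functions on `C(k+1)` and producing a function
on `C(k)`. -/
def upOp (C : Finset (Finset E)) (d : ℕ) (pid : Finset E → ℝ) (k : ℕ) :
    (Finset E → ℝ) → Finset E → ℝ :=
  upWith (piLev C d pid (k+1)) (faces C (k+1))

/-- The down operator `P_k^↓` (uniform removal of an element), acting on functions
on `C(k-1)` and producing a function on `C(k)`. -/
def downOp (k : ℕ) (g : Finset E → ℝ) (S : Finset E) : ℝ :=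
  (1 / (k : ℝ)) * ∑ i ∈ S, g (S.erase i)

/-- The down-up walk `P_k^∨ = P_k^↓ P_{k-1}^↑` on `C(k)`, as an operator on functions. -/
def downUp (C : Finset (Finset E)) (d : ℕ) (pid : Finset E → ℝ) (k : ℕ)
    (f : Finset E → ℝ) : Finset E → ℝ :=
  downOp k (upOp C d pid (k-1) f)

/-- The up-down walk `P_k^∧ = P_k^↑ P_{k+1}^↓` on `C(k)`, as an operator on functions. -/
def upDown (C : Finset (Finset E)) (d : ℕ) (pid : Finset E → ℝ) (k : ℕ)
    (f : Finset E → ℝ) : Finset E → ℝ :=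
  upOp C d pid k (downOp (k+1) f)

/-- The up operator `P_{S,k}^↑` on the link of `S`, acting on functions on `C_S(k+1)`
and producing a function on `C_S(k)`. -/
def linkUp (C : Finset (Finset E)) (d : ℕ) (pid : Finset E → ℝ) (S : Finset E) (k : ℕ) :
    (Finset E → ℝ) → Finset E → ℝ :=
  upWith (linkPi C d pid S (k+1)) (linkFaces C S (k+1))

/-- The up-down walk `P_{S,k}^∧` on the level-`k` faces of the link of `S`. -/
def linkUpDown (C : Finset (Finset E)) (d : ℕ) (pid : Finset E → ℝ) (S : Finset E) (k : ℕ)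
    (f : Finset E → ℝ) : Finset E → ℝ :=
  linkUp C d pid S k (downOp (k+1) f)

/-- The local walk `G_S := 2 P_{S,1}^∧ - I` on the vertices of the link of `S`. -/
def localWalk (C : Finset (Finset E)) (d : ℕ) (pid : Finset E → ℝ) (S : Finset E)
    (f : Finset E → ℝ) (T : Finset E) : ℝ :=
  2 * linkUpDown C d pid S 1 f T - f T

/-- Variance of `f` with respect to the measure `μ` on `dom`. -/
def pVar (μ : Finset E → ℝ) (dom : Finset (Finset E)) (f : Finset E → ℝ) : ℝ :=
  (∑ x ∈ dom, μ x * f x ^ 2) - (∑ x ∈ dom, μ x * f x) ^ 2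

/-- Relative entropy `Ent_μ(f) = E_μ[f log f] - E_μ[f] log E_μ[f]` of `f` with respect to
the measure `μ` on `dom` (note `Real.log 0 = 0`, giving the convention `0 log 0 = 0`). -/
def pEnt (μ : Finset E → ℝ) (dom : Finset (Finset E)) (f : Finset E → ℝ) : ℝ :=
  (∑ x ∈ dom, μ x * (f x * Real.log (f x))) -
    (∑ x ∈ dom, μ x * f x) * Real.log (∑ x ∈ dom, μ x * f x)

/-- The Dirichlet form `𝔈_P(f,g) = Σ_x μ(x) f(x) ((I - P) g)(x)` of a Markov operator `P`
reversible with respect to `μ` on `dom`. -/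
def pDiri (μ : Finset E → ℝ) (dom : Finset (Finset E))
    (P : (Finset E → ℝ) → Finset E → ℝ) (f g : Finset E → ℝ) : ℝ :=
  ∑ x ∈ dom, μ x * f x * (g x - P g x)

/-- The second largest eigenvalue of a Markov operator `P` reversible with respect to the
distribution `μ` on `dom`, via the variational characterisation: the supremum of Rayleigh
quotients `⟨f, Pf⟩_μ / ⟨f, f⟩_μ` over `f` orthogonal to the constants in `L²(μ)`. -/
noncomputable def lamTwo (μ : Finset E → ℝ) (dom : Finset (Finset E))
    (P : (Finset E → ℝ) → Finset E → ℝ) : ℝ :=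
  sSup {r : ℝ | ∃ f : Finset E → ℝ,
    (∑ x ∈ dom, μ x * f x = 0) ∧ (∑ x ∈ dom, μ x * f x ^ 2 ≠ 0) ∧
    r = (∑ x ∈ dom, μ x * f x * P f x) / ∑ x ∈ dom, μ x * f x ^ 2}

/-- The modified log-Sobolev constant `ρ(P)` of a Markov operator `P` reversible with
respect to `μ` on `dom`. -/
noncomputable def mlsConst (μ : Finset E → ℝ) (dom : Finset (Finset E))
    (P : (Finset E → ℝ) → Finset E → ℝ) : ℝ :=
  sInf {r : ℝ | ∃ f : Finset E → ℝ, (∀ x ∈ dom, 0 < f x) ∧ pEnt μ dom f ≠ 0 ∧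
    r = pDiri μ dom P f (fun x => Real.log (f x)) / pEnt μ dom f}

set_option linter.unusedSectionVars false

/-! ### Reversible weighted graphs -/

/-- The bilinear form `∑ A i j f i g j` of a symmetric edge weight `A`. -/
def edgeForm (A : E → E → ℝ) (f g : E → ℝ) : ℝ := ∑ i, ∑ j, A i j * f i * g j

/-- `A` is a loopless symmetric nonnegative edge weight whose row sums are `N` times the vertex
weight `v`; the associated reversible walk moves from `i` to `j` with probability
`A i j / (N * v i)`. -/
structure IsWalk (v : E → ℝ) (A : E → E → ℝ) (N : ℝ) : Prop where
  pos : 0 < N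
  nonneg : ∀ i j, 0 ≤ A i j
  symm : ∀ i j, A i j = A j i
  loopless : ∀ i, A i i = 0
  row : ∀ i, ∑ j, A i j = N * v i

/-- Rayleigh quotients of the walk of `A` over functions orthogonal to the constants. -/
def rayleighSet (v : E → ℝ) (A : E → E → ℝ) (N : ℝ) : Set ℝ :=
  {r | ∃ g : E → ℝ, ∑ i, v i * g i = 0 ∧ ∑ i, v i * g i ^ 2 ≠ 0 ∧
    r = edgeForm A g g / N / ∑ i, v i * g i ^ 2}

/-- The walk operator `g ↦ Gg`. At vertices of weight `0` it takes the junk value `0`. -/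
def walkOp (v : E → ℝ) (A : E → E → ℝ) (N : ℝ) (g : E → ℝ) (i : E) : ℝ :=
  (∑ j, A i j * g j) / (N * v i)

namespace IsWalk

variable {v : E → ℝ} {A : E → E → ℝ} {N : ℝ}

lemma weight_nonneg (h : IsWalk v A N) (i : E) : 0 ≤ v i := by
  have h1 : 0 ≤ N * v i := by rw [← h.row]; exact sum_nonneg fun j _ => h.nonneg i j
  exact nonneg_of_mul_nonneg_right h1 h.pos

lemma edge_eq_zero (h : IsWalk v A N) {i : E} (hi : v i = 0) (j : E) : A i j = 0 := by
  have h1 := h.row i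
  rw [hi, mul_zero, sum_eq_zero_iff_of_nonneg fun j _ => h.nonneg i j] at h1
  exact h1 j (mem_univ j)

/-- The defining property of the walk operator, valid also at vertices of weight `0`. -/
lemma mul_walkOp (h : IsWalk v A N) (g : E → ℝ) (i : E) :
    v i * walkOp v A N g i = (∑ j, A i j * g j) / N := by
  have hN := h.pos.ne'
  by_cases hi : v i = 0
  · simp [hi, h.edge_eq_zero hi]
  · unfold walkOp; field_simp

lemma sum_mul_walkOp (h : IsWalk v A N) (f g : E → ℝ) :
    ∑ i, v i * f i * walkOp v A N g i = edgeForm A f g / N := by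
  rw [edgeForm, sum_div]
  refine sum_congr rfl fun i _ => ?_
  rw [mul_right_comm, h.mul_walkOp, div_mul_eq_mul_div, sum_mul]
  congr 1
  exact sum_congr rfl fun j _ => by ring

lemma sum_row_left (h : IsWalk v A N) (f : E → ℝ) :
    ∑ i, ∑ j, A i j * f i = N * ∑ i, v i * f i := by
  rw [mul_sum]
  refine sum_congr rfl fun i _ => ?_
  rw [← sum_mul, h.row, mul_assoc]

lemma sum_row_right (h : IsWalk v A N) (f : E → ℝ) :
    ∑ i, ∑ j, A i j * f j = N * ∑ i, v i * f i := by
  rw [← h.sum_row_left, sum_comm]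
  exact sum_congr rfl fun i _ => sum_congr rfl fun j _ => by rw [h.symm]

lemma edgeForm_comm (h : IsWalk v A N) (f g : E → ℝ) : edgeForm A f g = edgeForm A g f := by
  unfold edgeForm
  rw [sum_comm]
  exact sum_congr rfl fun i _ => sum_congr rfl fun j _ => by rw [h.symm]; ring

lemma edgeForm_add_smul (h : IsWalk v A N) (f g : E → ℝ) (t : ℝ) :
    edgeForm A (fun i => f i + t * g i) (fun i => f i + t * g i) =
      edgeForm A f f + 2 * t * edgeForm A f g + t ^ 2 * edgeForm A g g := by
  have h1 : edgeForm A (fun i => f i + t * g i) (fun i => f i + t * g i) =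
      edgeForm A f f + t * edgeForm A f g + t * edgeForm A g f + t ^ 2 * edgeForm A g g := by
    simp only [edgeForm, mul_sum, ← sum_add_distrib]
    exact sum_congr rfl fun i _ => sum_congr rfl fun j _ => by ring
  rw [h1, h.edgeForm_comm g f]; ring

lemma edgeForm_one_right (h : IsWalk v A N) (f : E → ℝ) :
    edgeForm A f (fun _ => 1) = N * ∑ i, v i * f i := by
  rw [← h.sum_row_left]; simp [edgeForm]

/-- The walk has spectrum in `[-1, 1]`: both bounds come from `∑ A i j (g i ± g j)² ≥ 0`. -/
lemma edgeForm_bounds (h : IsWalk v A N) (g : E → ℝ) :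
    edgeForm A g g ≤ N * ∑ i, v i * g i ^ 2 ∧ -(N * ∑ i, v i * g i ^ 2) ≤ edgeForm A g g := by
  have key : ∀ s : ℝ, s ^ 2 = 1 →
      0 ≤ 2 * (N * ∑ i, v i * g i ^ 2) + 2 * s * edgeForm A g g := by
    intro s hs
    have h0 : 0 ≤ ∑ i, ∑ j, A i j * (g i + s * g j) ^ 2 :=
      sum_nonneg fun i _ => sum_nonneg fun j _ => mul_nonneg (h.nonneg i j) (sq_nonneg _)
    have h1 : ∑ i, ∑ j, A i j * (g i + s * g j) ^ 2 =
        ∑ i, ∑ j, A i j * (g i) ^ 2 + ∑ i, ∑ j, A i j * (g j) ^ 2 + 2 * s * edgeForm A g g := by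
      simp only [edgeForm, mul_sum, ← sum_add_distrib]
      refine sum_congr rfl fun i _ => sum_congr rfl fun j _ => ?_
      linear_combination (A i j * g j ^ 2) * hs
    rw [h1, h.sum_row_left (fun i => g i ^ 2), h.sum_row_right (fun i => g i ^ 2)] at h0
    linarith
  have h1 := key 1 (by norm_num)
  have h2 := key (-1) (by norm_num)
  constructor <;> linarith

lemma sq_norm_nonneg (h : IsWalk v A N) (g : E → ℝ) : 0 ≤ ∑ i, v i * g i ^ 2 :=
  sum_nonneg fun i _ => mul_nonneg (h.weight_nonneg i) (sq_nonneg _)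

lemma bddAbove (h : IsWalk v A N) : BddAbove (rayleighSet v A N) := by
  refine ⟨1, ?_⟩
  rintro r ⟨g, -, hg, rfl⟩
  have hN := h.pos
  have hg' := lt_of_le_of_ne (h.sq_norm_nonneg g) hg.symm
  rw [div_div, div_le_one (by positivity)]
  exact (h.edgeForm_bounds g).1

lemma edgeForm_le (h : IsWalk v A N) {μ : ℝ} (hμ : sSup (rayleighSet v A N) ≤ μ) (g : E → ℝ)
    (hg : ∑ i, v i * g i = 0) : edgeForm A g g ≤ μ * (N * ∑ i, v i * g i ^ 2) := by
  by_cases h0 : ∑ i, v i * g i ^ 2 = 0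
  · have := (h.edgeForm_bounds g).1
    rw [h0] at this ⊢
    linarith
  · have hN := h.pos
    have hg' := lt_of_le_of_ne (h.sq_norm_nonneg g) (Ne.symm h0)
    have := (le_csSup h.bddAbove ⟨g, hg, h0, rfl⟩).trans hμ
    rwa [div_div, div_le_iff₀ (by positivity)] at this

/-- Spectral gap inequality for functions with arbitrary mean: on the constants the walk has
eigenvalue `1`. If the total weight vanishes, both sides are `0`. -/
lemma edgeForm_le_of_mean (h : IsWalk v A N) {μ : ℝ} (hμ : sSup (rayleighSet v A N) ≤ μ)
    (g : E → ℝ) :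
    edgeForm A g g ≤
      N * (μ * ∑ i, v i * g i ^ 2 + (1 - μ) * ((∑ i, v i * g i) ^ 2 / ∑ i, v i)) := by
  by_cases hM : ∑ i, v i = 0
  · have hv : ∀ i, v i = 0 := fun i =>
      (sum_eq_zero_iff_of_nonneg fun i _ => h.weight_nonneg i).1 hM i (mem_univ i)
    have := (h.edgeForm_bounds g).1
    simpa [hv] using this
  · obtain ⟨m, hm⟩ : ∃ m, m = (∑ i, v i * g i) / ∑ i, v i := ⟨_, rfl⟩
    have hm' : ∑ i, v i * g i = m * ∑ i, v i := by rw [hm]; field_simp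
    have hmean : ∑ i, v i * (g i + (-m) * 1) = 0 := by
      simp only [mul_add, sum_add_distrib, mul_one, ← sum_mul]
      rw [hm']; ring
    have h1 := h.edgeForm_le hμ (fun i => g i + (-m) * 1) hmean
    rw [h.edgeForm_add_smul g (fun _ => 1), h.edgeForm_one_right, h.edgeForm_one_right] at h1
    have h2 : ∑ i, v i * (g i + (-m) * 1) ^ 2 = ∑ i, v i * g i ^ 2 - m ^ 2 * ∑ i, v i := by
      have : ∑ i, v i * (g i + (-m) * 1) ^ 2 =
          ∑ i, v i * g i ^ 2 - 2 * m * ∑ i, v i * g i + m ^ 2 * ∑ i, v i := by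
        simp only [mul_sum, ← sum_add_distrib, ← sum_sub_distrib]
        exact sum_congr rfl fun i _ => by ring
      rw [this, hm']; ring
    have h3 : (∑ i, v i * g i) ^ 2 / ∑ i, v i = m ^ 2 * ∑ i, v i := by
      rw [hm']; field_simp
    rw [h2, hm'] at h1
    rw [h3]
    simp only [mul_one] at h1
    linarith

lemma nonempty (h : IsWalk v A N) {i : E} (hi : 0 < v i) : (rayleighSet v A N).Nonempty := by
  have h1 : 0 < ∑ j, A i j := by rw [h.row]; exact mul_pos h.pos hi
  obtain ⟨j, -, hj⟩ := exists_lt_of_sum_lt (s := univ) (f := fun _ => (0 : ℝ)) (g := A i)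
    (by simpa using h1)
  have hij : i ≠ j := by rintro rfl; rw [h.loopless] at hj; exact lt_irrefl _ hj
  have hvj : 0 < v j := by
    refine lt_of_le_of_ne (h.weight_nonneg j) fun h0 => ?_
    rw [h.symm, h.edge_eq_zero h0.symm] at hj
    exact lt_irrefl _ hj
  -- the function `v j · 1_i - v i · 1_j` has mean zero
  refine ⟨_, fun x => (if x = i then v j else 0) - (if x = j then v i else 0), ?_, ?_, rfl⟩
  · simp only [mul_sub, sum_sub_distrib, mul_ite, mul_zero, sum_ite_eq', mem_univ, if_true]
    ring
  · refine (sum_pos' (fun x _ => mul_nonneg (h.weight_nonneg x) (sq_nonneg _))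
      ⟨i, mem_univ i, ?_⟩).ne'
    simp [hij]
    positivity

/-- The quadratic inequality `⟨g, Gg⟩ ≤ γ‖g‖² + (1-γ)‖Gg‖²` passes from functions to the second
eigenvalue `l`, giving `l ≤ γ + (1-γ) l²` and hence `l ≤ γ / (1-γ)` as `l < 1`. Instead of an
eigenfunction the proof uses that for mean-zero `g` the defect `h = l g - G g` is controlled by
the form `q = ⟨g, (l - G) g⟩`, namely `‖h‖² ≤ 2 q`. -/
lemma sSup_le (h : IsWalk v A N) {γ : ℝ} (hγ : γ < 1) {i₀ : E} (hi₀ : 0 < v i₀)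
    (hlt : sSup (rayleighSet v A N) < 1)
    (H : ∀ g : E → ℝ, edgeForm A g g ≤
      N * (γ * ∑ i, v i * g i ^ 2 + (1 - γ) * ∑ i, v i * walkOp v A N g i ^ 2)) :
    sSup (rayleighSet v A N) ≤ γ / (1 - γ) := by
  obtain ⟨l, hl⟩ : ∃ l, l = sSup (rayleighSet v A N) := ⟨_, rfl⟩
  rw [← hl] at hlt ⊢
  have hN := h.pos
  have hK : 0 < 1 + (1 - γ) * (2 - 2 * l) := by nlinarith
  have main : ∀ g : E → ℝ, ∑ i, v i * g i = 0 →
      (l - γ - (1 - γ) * l ^ 2) * ∑ i, v i * g i ^ 2 ≤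
      (1 + (1 - γ) * (2 - 2 * l)) * (l * ∑ i, v i * g i ^ 2 - edgeForm A g g / N) := by
    intro g hg
    set G := walkOp v A N g with hG
    set X := ∑ i, v i * g i ^ 2 with hX
    set Y := edgeForm A g g / N with hY
    have hYe : edgeForm A g g = N * Y := by rw [hY]; field_simp
    have hgG : ∑ i, v i * g i * G i = Y := h.sum_mul_walkOp g g
    let f : E → ℝ := fun i => l * g i - G i
    set Z := ∑ i, v i * f i ^ 2 with hZ
    have hfZ : ∑ i, v i * f i ^ 2 = l * ∑ i, v i * f i * g i - ∑ i, v i * f i * G i := by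
      rw [mul_sum, ← sum_sub_distrib]
      exact sum_congr rfl fun i _ => by simp only [f]; ring
    have hfg : ∑ i, v i * f i * g i = l * X - Y := by
      rw [← hgG, hX, mul_sum, ← sum_sub_distrib]
      exact sum_congr rfl fun i _ => by simp only [f]; ring
    have hfG : ∑ i, v i * f i * G i = edgeForm A f g / N := h.sum_mul_walkOp f g
    have hfGe : edgeForm A f g = N * (l * (l * X - Y) - Z) := by
      have : edgeForm A f g / N = l * (l * X - Y) - Z := by
        rw [← hfG, ← hfg, hZ, hfZ]; ring
      rw [← this]; field_simp
    have hGmean : ∑ i, v i * G i = 0 := by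
      have h1 := h.sum_mul_walkOp (fun _ => 1) g
      rw [h.edgeForm_comm, h.edgeForm_one_right, hg] at h1
      simpa using h1
    have hfmean : ∑ i, v i * f i = 0 := by
      have : ∑ i, v i * f i = l * ∑ i, v i * g i - ∑ i, v i * G i := by
        rw [mul_sum, ← sum_sub_distrib]
        exact sum_congr rfl fun i _ => by simp only [f]; ring
      rw [this, hg, hGmean]; ring
    -- positivity of `l - G` on `g - f / 2`, which is again of mean zero
    have hZle : Z ≤ 2 * (l * X - Y) := by
      have h1 := h.edgeForm_le hl.ge (fun i => g i + (-(1 / 2)) * f i) (by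
        have : ∑ i, v i * (g i + (-(1 / 2)) * f i) =
            ∑ i, v i * g i - 1 / 2 * ∑ i, v i * f i := by
          rw [mul_sum, ← sum_sub_distrib]
          exact sum_congr rfl fun i _ => by ring
        rw [this, hg, hfmean]; ring)
      have h2 : ∑ i, v i * (g i + (-(1 / 2)) * f i) ^ 2 = X - (l * X - Y) + Z / 4 := by
        rw [← hfg, hX, hZ, sum_div, ← sum_sub_distrib, ← sum_add_distrib]
        exact sum_congr rfl fun i _ => by ring
      rw [h.edgeForm_add_smul, h.edgeForm_comm g f, hfGe, hYe, h2] at h1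
      have h3 := (h.edgeForm_bounds f).2
      rw [← hZ] at h3
      have hZ0 : 0 ≤ Z := h.sq_norm_nonneg f
      have h4 : N * (Z - 2 * (l * X - Y)) ≤ 0 := by
        have h5 : 0 ≤ N * ((1 - l) * Z) := mul_nonneg hN.le (mul_nonneg (by linarith) hZ0)
        linarith
      have := nonpos_of_mul_nonpos_right h4 hN
      linarith
    have hGG : ∑ i, v i * G i ^ 2 = l ^ 2 * X - 2 * l * (l * X - Y) + Z := by
      rw [← hfg, hX, hZ, mul_sum, mul_sum, ← sum_sub_distrib, ← sum_add_distrib]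
      exact sum_congr rfl fun i _ => by simp only [f]; ring
    have h1 := H g
    rw [← hG, hGG, hYe, ← hX] at h1
    have h2 := le_of_mul_le_mul_left h1 hN
    nlinarith [mul_le_mul_of_nonneg_left hZle (by linarith : (0 : ℝ) ≤ 1 - γ)]
  have hsup : l ≤ l - (l - γ - (1 - γ) * l ^ 2) / (1 + (1 - γ) * (2 - 2 * l)) := by
    conv_lhs => rw [hl]
    refine csSup_le (h.nonempty hi₀) ?_
    rintro r ⟨g, hg, hg0, rfl⟩
    have hX : 0 < ∑ i, v i * g i ^ 2 := lt_of_le_of_ne (h.sq_norm_nonneg g) hg0.symm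
    have h1 := main g hg
    rw [div_le_iff₀ hX]
    have h2 : (l - γ - (1 - γ) * l ^ 2) / (1 + (1 - γ) * (2 - 2 * l)) * ∑ i, v i * g i ^ 2 ≤
        l * ∑ i, v i * g i ^ 2 - edgeForm A g g / N := by
      rw [div_mul_eq_mul_div, div_le_iff₀ hK]; linarith
    linarith
  have hc : l - γ - (1 - γ) * l ^ 2 ≤ 0 := by
    by_contra! hc
    have := div_pos hc hK
    linarith
  rw [le_div_iff₀ (by linarith)]
  have h1 : (1 - l) * (l * (1 - γ) - γ) ≤ 0 := by linarith
  have := nonpos_of_mul_nonpos_right h1 (by linarith)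
  linarith

end IsWalk

/-! ### Weights of vertices and edges in a link -/

/-- Weight of the vertex `i` in the link of `S`; zero when `i ∈ S`. -/
def vertexWgt (C : Finset (Finset E)) (d : ℕ) (pid : Finset E → ℝ) (S : Finset E) (i : E) : ℝ :=
  if i ∈ S then 0 else wgt C d pid (insert i S)

/-- Weight of the edge `{i, j}` in the link of `S`, as the weight of `j` in the link of
`insert i S`; zero when `i`, `j` are not two distinct elements outside `S`. -/
def edgeWgt (C : Finset (Finset E)) (d : ℕ) (pid : Finset E → ℝ) (S : Finset E) (i j : E) : ℝ :=
  if i ∈ S then 0 else vertexWgt C d pid (insert i S) j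

section Weights

variable {C : Finset (Finset E)} {d : ℕ} {pid : Finset E → ℝ}

lemma wgt_nonneg (hpid : IsTopDist C d pid) (S : Finset E) : 0 ≤ wgt C d pid S :=
  sum_nonneg fun T hT => (hpid.1 T (mem_of_mem_filter T hT)).le

lemma wgt_pos (hC : IsPureComplex C d) (hpid : IsTopDist C d pid) {S : Finset E} (hS : S ∈ C) :
    0 < wgt C d pid S := by
  obtain ⟨T, hT, hST, hTd⟩ := hC.2.2 S hS
  refine sum_pos (fun T hT => hpid.1 T (mem_of_mem_filter T hT)) ⟨T, ?_⟩
  simp [faces, hT, hST, hTd]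

lemma wgt_eq_zero (hC : IsPureComplex C d) {S : Finset E} (hS : S ∉ C) : wgt C d pid S = 0 := by
  unfold wgt
  rw [filter_eq_empty_iff.2, sum_empty]
  intro T hT hST
  exact hS (hC.2.1 T (mem_of_mem_filter T hT) S hST)

/-- Each top face `T ⊇ S` is counted once for each of its `d - |S|` elements outside `S`. -/
lemma sum_vertexWgt (S : Finset E) :
    ∑ i, vertexWgt C d pid S i = ((d : ℝ) - S.card) * wgt C d pid S := by
  have h1 : ∀ i, vertexWgt C d pid S i =
      ∑ T ∈ faces C d, if i ∈ T \ S ∧ S ⊆ T then pid T else 0 := by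
    intro i
    unfold vertexWgt wgt
    by_cases hi : i ∈ S
    · simp [hi]
    · simp [hi, sum_filter, insert_subset_iff]
  simp_rw [h1]
  rw [sum_comm, wgt, sum_filter, mul_sum]
  refine sum_congr rfl fun T hT => ?_
  by_cases hST : S ⊆ T
  · have hc : T.card = d := (mem_filter.1 hT).2
    have h2 : ((T \ S).card : ℝ) = d - S.card := by
      rw [card_sdiff_of_subset hST, Nat.cast_sub (card_le_card hST), hc]
    simp only [hST, and_true, if_true]
    rw [← sum_filter, sum_const, nsmul_eq_mul, ← h2, filter_univ_mem]
  · simp [hST]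

lemma edgeWgt_eq (S : Finset E) (i j : E) : edgeWgt C d pid S i j =
    if i ∈ S ∨ j ∈ S ∨ i = j then 0 else wgt C d pid (insert i (insert j S)) := by
  unfold edgeWgt vertexWgt
  rw [insert_comm i j]
  by_cases hi : i ∈ S <;> by_cases hj : j ∈ S <;> by_cases hij : i = j <;>
    simp [hi, hj, hij, eq_comm]

lemma isWalk_link (hpid : IsTopDist C d pid) {S : Finset E} (hS : S.card + 2 ≤ d) :
    IsWalk (vertexWgt C d pid S) (edgeWgt C d pid S) ((d : ℝ) - S.card - 1) where
  pos := by
    have : ((S.card + 2 : ℕ) : ℝ) ≤ d := Nat.cast_le.2 hS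
    push_cast at this
    linarith
  nonneg i j := by
    rw [edgeWgt_eq]
    split_ifs
    exacts [le_rfl, wgt_nonneg hpid _]
  symm i j := by
    rw [edgeWgt_eq, edgeWgt_eq, insert_comm i j]
    by_cases hi : i ∈ S <;> by_cases hj : j ∈ S <;> by_cases hij : i = j <;>
      simp [hi, hj, hij, eq_comm]
  loopless i := by simp [edgeWgt_eq]
  row i := by
    unfold edgeWgt
    by_cases hi : i ∈ S
    · simp [hi, vertexWgt]
    · simp only [hi, if_false]
      rw [sum_vertexWgt, vertexWgt, if_neg hi, card_insert_of_notMem hi]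
      push_cast
      ring

/-- Each top face above `S ∪ {j, l}` is counted once for each of its `d - |S| - 2` remaining
elements. -/
lemma sum_edgeWgt_insert (S : Finset E) (j l : E) :
    ∑ i, (if i ∈ S then 0 else edgeWgt C d pid (insert i S) j l) =
      ((d : ℝ) - S.card - 2) * edgeWgt C d pid S j l := by
  by_cases h : j ∈ S ∨ l ∈ S ∨ j = l
  · rw [edgeWgt_eq, if_pos h, mul_zero]
    refine sum_eq_zero fun i _ => ?_
    split_ifs with hi
    · rfl
    · rw [edgeWgt_eq, if_pos]
      simp only [mem_insert]
      tauto
  · rw [edgeWgt_eq, if_neg h]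
    push Not at h
    obtain ⟨hj, hl, hjl⟩ := h
    have hcard : (insert j (insert l S)).card = S.card + 2 := by
      rw [card_insert_of_notMem (by simp [hj, hjl]), card_insert_of_notMem hl]
    have h1 := sum_vertexWgt (C := C) (d := d) (pid := pid) (insert j (insert l S))
    rw [hcard] at h1
    push_cast at h1
    rw [← sub_sub] at h1
    rw [← h1]
    refine sum_congr rfl fun i _ => ?_
    rw [edgeWgt_eq, vertexWgt]
    have h2 : insert j (insert l (insert i S)) = insert i (insert j (insert l S)) := by
      ext x; simp only [mem_insert]; tauto
    rw [h2]
    by_cases hi : i ∈ S <;> by_cases hij : i = j <;> by_cases hil : i = l <;>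
      simp [hi, hij, hil, hj, hl, hjl, eq_comm]
    all_goals grind

/-- Summing the spectral gap inequalities of the links of `S ∪ {i}` over `i`: the left sides add
up to the form of the link of `S`, and the mean of `g` in the link of `S ∪ {i}` is `(Gg)(i)`. -/
lemma edgeForm_link_le (hC : IsPureComplex C d) (hpid : IsTopDist C d pid) {S : Finset E}
    (hS : S.card + 3 ≤ d) {γ : ℝ}
    (hloc : ∀ i, i ∉ S → insert i S ∈ C →
      sSup (rayleighSet (vertexWgt C d pid (insert i S)) (edgeWgt C d pid (insert i S))
        ((d : ℝ) - (insert i S).card - 1)) ≤ γ) (g : E → ℝ) :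
    edgeForm (edgeWgt C d pid S) g g ≤ ((d : ℝ) - S.card - 1) *
      (γ * ∑ i, vertexWgt C d pid S i * g i ^ 2 + (1 - γ) * ∑ i, vertexWgt C d pid S i *
        walkOp (vertexWgt C d pid S) (edgeWgt C d pid S) ((d : ℝ) - S.card - 1) g i ^ 2) := by
  have hW := isWalk_link hpid (S := S) (by omega)
  set N : ℝ := (d : ℝ) - S.card - 1 with hNdef
  have hN2 : 0 < N - 1 := by
    have : ((S.card + 3 : ℕ) : ℝ) ≤ d := Nat.cast_le.2 hS
    push_cast at this
    linarith
  have hstep : ∀ i, (if i ∈ S then 0 else edgeForm (edgeWgt C d pid (insert i S)) g g) ≤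
      (N - 1) * (γ * ∑ j, edgeWgt C d pid S i j * g j ^ 2 +
        (1 - γ) * (N * (vertexWgt C d pid S i *
          walkOp (vertexWgt C d pid S) (edgeWgt C d pid S) N g i ^ 2))) := by
    intro i
    by_cases hi : i ∈ S
    · simp [hi, edgeWgt, vertexWgt]
    rw [if_neg hi]
    have hcard : (insert i S).card = S.card + 1 := card_insert_of_notMem hi
    have hWi := isWalk_link hpid (S := insert i S) (by omega)
    have hNi : (d : ℝ) - (insert i S).card - 1 = N - 1 := by
      rw [hcard, hNdef]; push_cast; ring
    have hrow := hW.row i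
    have hE : ∀ j, edgeWgt C d pid S i j = vertexWgt C d pid (insert i S) j := fun j => by
      simp [edgeWgt, hi]
    by_cases hiC : insert i S ∈ C
    · have h1 := hWi.edgeForm_le_of_mean (hloc i hi hiC) g
      rw [hNi] at h1
      simp only [hE] at hrow ⊢
      refine h1.trans (le_of_eq ?_)
      have hv : vertexWgt C d pid S i ≠ 0 := by
        rw [vertexWgt, if_neg hi]; exact (wgt_pos hC hpid hiC).ne'
      have hN := hW.pos.ne'
      rw [hrow]
      simp only [walkOp, hE]
      field_simp
    · have hv : vertexWgt C d pid S i = 0 := by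
        rw [vertexWgt, if_neg hi]; exact wgt_eq_zero hC hiC
      have hz : ∀ j, vertexWgt C d pid (insert i S) j = 0 := fun j => by
        rw [← hE]; exact hW.edge_eq_zero hv j
      have := (hWi.edgeForm_bounds g).1
      simp only [hz, zero_mul, sum_const_zero, mul_zero] at this
      simpa [hE, hz, hv] using this
  have hsum := sum_le_sum fun i (_ : i ∈ univ) => hstep i
  have hL : ∑ i, (if i ∈ S then 0 else edgeForm (edgeWgt C d pid (insert i S)) g g) =
      (N - 1) * edgeForm (edgeWgt C d pid S) g g := by
    have h1 : ∀ i, (if i ∈ S then 0 else edgeForm (edgeWgt C d pid (insert i S)) g g) =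
        ∑ j, ∑ l, (if i ∈ S then 0 else edgeWgt C d pid (insert i S) j l) * g j * g l := by
      intro i
      by_cases hi : i ∈ S <;> simp [hi, edgeForm]
    simp_rw [h1]
    rw [sum_comm, edgeForm, mul_sum]
    refine sum_congr rfl fun j _ => ?_
    rw [sum_comm, mul_sum]
    refine sum_congr rfl fun l _ => ?_
    rw [← sum_mul, ← sum_mul, sum_edgeWgt_insert, hNdef]
    ring
  rw [hL, ← mul_sum, sum_add_distrib, ← mul_sum, ← mul_sum, ← mul_sum,
    hW.sum_row_right (fun j => g j ^ 2)] at hsum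
  have := le_of_mul_le_mul_left hsum hN2
  linarith

end Weights

/-! ### The local walk in terms of link weights -/

section LocalWalk

variable {C : Finset (Finset E)} {d : ℕ} {pid : Finset E → ℝ}

lemma mem_linkFaces {S T : Finset E} {k : ℕ} :
    T ∈ linkFaces C S k ↔ S ∩ T = ∅ ∧ S ∪ T ∈ C ∧ T.card = k := by
  simp [linkFaces]

lemma singleton_mem_linkFaces {S : Finset E} {i : E} :
    {i} ∈ linkFaces C S 1 ↔ i ∉ S ∧ insert i S ∈ C := by
  rw [mem_linkFaces, ← disjoint_iff_inter_eq_empty, disjoint_singleton_right, union_comm,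
    ← insert_eq]
  simp

lemma linkPi_eq (hC : IsPureComplex C d) (hpid : IsTopDist C d pid) {S : Finset E} (hS : S ∈ C)
    {k : ℕ} (hk : S.card + k ≤ d) :
    ∃ c : ℝ, 0 < c ∧ ∀ T ∈ linkFaces C S k, linkPi C d pid S k T = c * wgt C d pid (S ∪ T) := by
  have hface : ∀ T ∈ linkFaces C S k, S ∪ T ∈ faces C (S.card + k) := by
    intro T hT
    rw [mem_linkFaces] at hT
    rw [faces, mem_filter, card_union_of_disjoint (disjoint_iff_inter_eq_empty.2 hT.1), hT.2.2]
    exact ⟨hT.2.1, rfl⟩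
  have hne : (linkFaces C S k).Nonempty := by
    obtain ⟨T, hT, hST, hTd⟩ := hC.2.2 S hS
    obtain ⟨R, hR, hRk⟩ := exists_subset_card_eq (s := T \ S) (n := k) (by
      rw [card_sdiff_of_subset hST]; omega)
    refine ⟨R, mem_linkFaces.2 ⟨?_, hC.2.1 T hT _ (union_subset hST (hR.trans sdiff_subset)), hRk⟩⟩
    rw [← disjoint_iff_inter_eq_empty]
    exact (disjoint_sdiff (s := S) (t := T)).mono_right hR
  set Z := ∑ T ∈ faces C (S.card + k), wgt C d pid T with hZ
  have hZpos : 0 < Z := by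
    obtain ⟨R, hR⟩ := hne
    exact sum_pos (fun T hT => wgt_pos hC hpid (mem_of_mem_filter T hT)) ⟨_, hface R hR⟩
  have hlev : ∀ T ∈ linkFaces C S k,
      piLev C d pid (S.card + k) (S ∪ T) = wgt C d pid (S ∪ T) / Z := fun T hT => by
    rw [piLev, if_pos (hface T hT)]
  have hpos : ∀ T ∈ linkFaces C S k, 0 < piLev C d pid (S.card + k) (S ∪ T) := fun T hT => by
    rw [hlev T hT]
    exact div_pos (wgt_pos hC hpid (mem_linkFaces.1 hT).2.1) hZpos
  refine ⟨1 / (Z * ∑ T' ∈ linkFaces C S k, piLev C d pid (S.card + k) (S ∪ T')),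
    one_div_pos.2 (mul_pos hZpos (sum_pos hpos hne)), fun T hT => ?_⟩
  rw [linkPi, if_pos hT, hlev T hT]
  field_simp

lemma sum_linkFaces_one (hC : IsPureComplex C d) (S : Finset E) (F : Finset E → ℝ) :
    ∑ T ∈ linkFaces C S 1, wgt C d pid (S ∪ T) * F T = ∑ i, vertexWgt C d pid S i * F {i} := by
  symm
  rw [← sum_filter_add_sum_filter_not univ (fun i => i ∉ S ∧ insert i S ∈ C)]
  rw [sum_eq_zero (s := filter (fun i => ¬ (i ∉ S ∧ insert i S ∈ C)) univ), add_zero]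
  · refine sum_bij (fun i _ => {i}) ?_ ?_ ?_ ?_
    · intro i hi
      exact singleton_mem_linkFaces.2 (mem_filter.1 hi).2
    · intro i _ j _ hij
      exact singleton_injective hij
    · intro T hT
      obtain ⟨i, rfl⟩ := card_eq_one.1 (mem_linkFaces.1 hT).2.2
      exact ⟨i, mem_filter.2 ⟨mem_univ i, singleton_mem_linkFaces.1 hT⟩, rfl⟩
    · intro i hi
      rw [vertexWgt, if_neg (mem_filter.1 hi).2.1, union_comm, ← insert_eq]
  · intro i hi
    have hi' := (mem_filter.1 hi).2
    by_cases h : i ∈ S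
    · simp [vertexWgt, h]
    · rw [vertexWgt, if_neg h, wgt_eq_zero hC (fun h' => hi' ⟨h, h'⟩), zero_mul]

lemma sum_linkFaces_two (hC : IsPureComplex C d) {S : Finset E} {i : E}
    (hi : i ∉ S) (F : Finset E → ℝ) :
    ∑ T ∈ (linkFaces C S 2).filter (fun T => {i} ⊆ T), wgt C d pid (S ∪ T) * F T =
      ∑ j, edgeWgt C d pid S i j * F {i, j} := by
  have h1 := sum_linkFaces_one (pid := pid) hC (insert i S) (fun T => F (insert i T))
  have h2 : ∀ j, edgeWgt C d pid S i j = vertexWgt C d pid (insert i S) j := fun j => by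
    simp [edgeWgt, hi]
  simp only [h2]
  rw [← h1]
  symm
  refine sum_bij' (fun T _ => insert i T) (fun T _ => T.erase i) ?_ ?_ ?_ ?_ ?_
  · intro T hT
    rw [mem_linkFaces] at hT
    have hiT : i ∉ T := fun h => by
      have : i ∈ insert i S ∩ T := by simp [h]
      rw [hT.1] at this
      simp at this
    rw [mem_filter, mem_linkFaces, card_insert_of_notMem hiT, hT.2.2]
    refine ⟨⟨?_, ?_, rfl⟩, by simp⟩
    · rw [inter_insert_of_notMem hi, ← subset_empty, ← hT.1]
      exact inter_subset_inter_right (subset_insert i S)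
    · have := hT.2.1
      rwa [insert_union, ← union_insert] at this
  · intro T hT
    rw [mem_filter, mem_linkFaces, singleton_subset_iff] at hT
    obtain ⟨⟨h3, h4, h5⟩, h6⟩ := hT
    rw [mem_linkFaces, card_erase_of_mem h6, h5]
    refine ⟨?_, ?_, rfl⟩
    · rw [insert_inter_of_notMem (by simp), ← subset_empty, ← h3]
      exact inter_subset_inter_left (erase_subset i T)
    · rwa [insert_union, ← union_insert, insert_erase h6]
  · intro T hT
    rw [mem_linkFaces] at hT
    refine erase_insert fun h => ?_
    have : i ∈ insert i S ∩ T := by simp [h]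
    rw [hT.1] at this
    simp at this
  · intro T hT
    rw [mem_filter, singleton_subset_iff] at hT
    exact insert_erase hT.2
  · intro T _
    rw [insert_union, ← union_insert]

/-- On the vertices of the link, `G_S` is the walk operator of the link weights. -/
lemma localWalk_eq (hC : IsPureComplex C d) (hpid : IsTopDist C d pid) {S : Finset E}
    (hS : S ∈ C) (hk : S.card + 2 ≤ d) (f : Finset E → ℝ) {i : E} (hi : i ∉ S)
    (hiC : insert i S ∈ C) :
    localWalk C d pid S f {i} =
      walkOp (vertexWgt C d pid S) (edgeWgt C d pid S) ((d : ℝ) - S.card - 1)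
        (fun j => f {j}) i := by
  obtain ⟨c, hc, hcT⟩ := linkPi_eq hC hpid hS hk
  have hW := isWalk_link hpid hk
  have hN := hW.pos
  have hv : 0 < vertexWgt C d pid S i := by
    rw [vertexWgt, if_neg hi]; exact wgt_pos hC hpid hiC
  have hnorm : ∑ T ∈ (linkFaces C S 2).filter (fun T => {i} ⊆ T), linkPi C d pid S 2 T =
      c * (((d : ℝ) - S.card - 1) * vertexWgt C d pid S i) := by
    rw [← hW.row]
    have := sum_linkFaces_two (pid := pid) hC hi (fun _ => 1)
    simp only [mul_one] at this
    rw [← this, mul_sum]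
    exact sum_congr rfl fun T hT => hcT T (mem_of_mem_filter T hT)
  have hsum : linkUpDown C d pid S 1 f {i} =
      (∑ T ∈ (linkFaces C S 2).filter (fun T => {i} ⊆ T),
        wgt C d pid (S ∪ T) * downOp 2 f T) / (((d : ℝ) - S.card - 1) * vertexWgt C d pid S i) := by
    rw [linkUpDown, linkUp, upWith]
    simp only [Nat.reduceAdd]
    rw [hnorm, sum_div]
    refine sum_congr rfl fun T hT => ?_
    rw [hcT T (mem_of_mem_filter T hT)]
    field_simp
  have hdown : ∀ j, edgeWgt C d pid S i j * downOp 2 f {i, j} =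
      edgeWgt C d pid S i j * f {i} / 2 + edgeWgt C d pid S i j * f {j} / 2 := by
    intro j
    by_cases hij : i = j
    · subst hij; simp [hW.loopless]
    · have h1 : ({i, j} : Finset E).erase i = {j} := by
        rw [erase_insert]; simpa using hij
      have h2 : ({i, j} : Finset E).erase j = {i} := by
        rw [pair_comm, erase_insert]; simpa using Ne.symm hij
      rw [downOp, sum_pair hij, h1, h2]
      push_cast
      ring
  rw [localWalk, hsum, sum_linkFaces_two hC hi]
  simp_rw [hdown]
  rw [sum_add_distrib, ← sum_div, ← sum_div, ← sum_mul, hW.row, walkOp]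
  field_simp
  ring

lemma lamTwo_eq (hC : IsPureComplex C d) (hpid : IsTopDist C d pid) {S : Finset E}
    (hS : S ∈ C) (hk : S.card + 2 ≤ d) :
    lamTwo (linkPi C d pid S 1) (linkFaces C S 1) (localWalk C d pid S) =
      sSup (rayleighSet (vertexWgt C d pid S) (edgeWgt C d pid S) ((d : ℝ) - S.card - 1)) := by
  obtain ⟨c, hc, hcT⟩ := linkPi_eq (k := 1) hC hpid hS (by omega)
  have hW := isWalk_link hpid hk
  have hsum : ∀ F : Finset E → ℝ, ∑ T ∈ linkFaces C S 1, linkPi C d pid S 1 T * F T =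
      c * ∑ i, vertexWgt C d pid S i * F {i} := by
    intro F
    rw [← sum_linkFaces_one hC, mul_sum]
    exact sum_congr rfl fun T hT => by rw [hcT T hT]; ring
  have hform : ∀ f : Finset E → ℝ,
      ∑ T ∈ linkFaces C S 1, linkPi C d pid S 1 T * f T * localWalk C d pid S f T =
      c * (edgeForm (edgeWgt C d pid S) (fun i => f {i}) (fun i => f {i}) /
        ((d : ℝ) - S.card - 1)) := by
    intro f
    simp only [mul_assoc]
    rw [hsum (fun T => f T * localWalk C d pid S f T), ← hW.sum_mul_walkOp]
    congr 1
    refine sum_congr rfl fun i _ => ?_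
    by_cases hi : i ∉ S ∧ insert i S ∈ C
    · rw [localWalk_eq hC hpid hS hk f hi.1 hi.2]; ring
    · have : vertexWgt C d pid S i = 0 := by
        unfold vertexWgt
        by_cases h : i ∈ S
        · simp [h]
        · rw [if_neg h]; exact wgt_eq_zero hC fun h' => hi ⟨h, h'⟩
      simp [this]
  unfold lamTwo rayleighSet
  congr 1
  ext r
  simp only [Set.mem_ofPred_eq]
  constructor
  · rintro ⟨f, h1, h2, rfl⟩
    rw [hsum] at h1
    rw [hform, hsum fun T => f T ^ 2]
    rw [hsum fun T => f T ^ 2] at h2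
    exact ⟨fun i => f {i}, (mul_eq_zero.1 h1).resolve_left hc.ne', right_ne_zero_of_mul h2,
      mul_div_mul_left _ _ hc.ne'⟩
  · rintro ⟨g, h1, h2, rfl⟩
    refine ⟨fun T => ∑ x ∈ T, g x, ?_, ?_, ?_⟩
    · rw [hsum]; simp [h1]
    · rw [hsum fun T => (∑ x ∈ T, g x) ^ 2]
      simpa [hc.ne'] using h2
    · rw [hform, hsum fun T => (∑ x ∈ T, g x) ^ 2, mul_div_mul_left _ _ hc.ne']
      simp

end LocalWalk

/-- **Trickling down theorem** (Oppenheim). If every local walk `G_T` at a level-`k` face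
has second eigenvalue at most `γ < 1`, then every level-`(k-1)` face `S` whose local walk
is connected (`λ₂(G_S) < 1`) satisfies `λ₂(G_S) ≤ γ/(1-γ)`. -/
theorem trickling_down {E : Type*} [Fintype E] [DecidableEq E]
    (C : Finset (Finset E)) (d : ℕ) (pid : Finset E → ℝ)
    (hC : IsPureComplex C d) (hpid : IsTopDist C d pid)
    (k : ℕ) (hk1 : 1 ≤ k) (hk2 : k ≤ d - 2) (γ : ℝ) (hγ : γ < 1)
    (hloc : ∀ T ∈ faces C k,
      lamTwo (linkPi C d pid T 1) (linkFaces C T 1) (localWalk C d pid T) ≤ γ) :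
    ∀ S ∈ faces C (k - 1),
      lamTwo (linkPi C d pid S 1) (linkFaces C S 1) (localWalk C d pid S) < 1 →
      lamTwo (linkPi C d pid S 1) (linkFaces C S 1) (localWalk C d pid S) ≤ γ / (1 - γ) := by
  intro S hS hlt
  obtain ⟨hSC, hScard⟩ := mem_filter.1 hS
  have hd : S.card + 3 ≤ d := by omega
  rw [lamTwo_eq hC hpid hSC (by omega)] at hlt ⊢
  have hW := isWalk_link hpid (S := S) (by omega)
  -- a vertex of positive weight in the link of `S`
  obtain ⟨i₀, hi₀⟩ : ∃ i, 0 < vertexWgt C d pid S i := by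
    by_contra! h
    have h1 : ∑ i, vertexWgt C d pid S i ≤ 0 := sum_nonpos fun i _ => h i
    rw [sum_vertexWgt] at h1
    have h2 := wgt_pos hC hpid hSC
    have h3 := hW.pos
    nlinarith
  refine hW.sSup_le hγ hi₀ hlt (edgeForm_link_le hC hpid hd fun i hi hiC => ?_)
  have hcard : (insert i S).card = k := by
    rw [card_insert_of_notMem hi]; omega
  rw [← lamTwo_eq hC hpid hiC (by omega)]
  exact hloc _ (mem_filter.2 ⟨hiC, hcard⟩)
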